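/- Fix θ̂_1,…,θ̂_S ∈ ℝⁿ and data x_1,…,x_N ∈ ℝⁿ, y_1,…,y_N ∈ ℝ. For each k choose s_k ∈ argmin_{s∈{1,…,S}} (y_k − x_kᵀθ̂_s)² and define ξ̂_{s,k} = 1 if s = s_k and ξ̂_{s,k} = 0 otherwise. Then ξ̂ attains the minimum of F(θ̂, ξ) = ∑_{k=1}^N [ ∑_{s=1}^S ξ_{s,k}(y_k − x_kᵀθ̂_s)² + (1 − ∑_{s=1}^S ξ_{s,k}²) ] over all ξ with 0 ≤ ξ_{s,k} ≤ 1 and ∑_{s=1}^S ξ_{s,k} = 1 for every k, and the attained minimum equals ∑_{k=1}^N min_{1≤s≤S} (y_k − x_kᵀθ̂_s)². -/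

import Mathlib

/-!
The cost splits over samples. For one sample, the linear part is a convex combination of the
squared residuals, hence at least the smallest of them, and the penalty `1 - ∑ ξ²` is nonnegative
because `ξ² ≤ ξ` on `[0, 1]`. A one-hot weight at a minimizing index attains both bounds at once.
-/

open Matrix Finset

/-- Step 2 of the block-coordinate descent algorithm in closed form: assigning each sample
to a subsystem with smallest squared residual minimizes the relaxed penalized cost over the
feasible set, and the attained minimum is the sum of the per-sample minimal squared
residuals. -/
theorem stmt_6 {n S N : ℕ}
    (x : Fin N → Fin n → ℝ) (y : Fin N → ℝ) (θh : Fin S → Fin n → ℝ)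
    (sk : Fin N → Fin S)
    (hsk : ∀ k s, (y k - x k ⬝ᵥ θh (sk k)) ^ 2 ≤ (y k - x k ⬝ᵥ θh s) ^ 2)
    (ξh : Fin S → Fin N → ℝ)
    (hξh : ∀ s k, ξh s k = if s = sk k then (1 : ℝ) else 0) :
    ((∀ s k, 0 ≤ ξh s k ∧ ξh s k ≤ 1) ∧ ∀ k, ∑ s, ξh s k = 1) ∧
    (∀ ξ : Fin S → Fin N → ℝ,
      ((∀ s k, 0 ≤ ξ s k ∧ ξ s k ≤ 1) ∧ ∀ k, ∑ s, ξ s k = 1) →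
      ∑ k, ((∑ s, ξh s k * (y k - x k ⬝ᵥ θh s) ^ 2) + (1 - ∑ s, (ξh s k) ^ 2)) ≤
        ∑ k, ((∑ s, ξ s k * (y k - x k ⬝ᵥ θh s) ^ 2) + (1 - ∑ s, (ξ s k) ^ 2))) ∧
    ∑ k, ((∑ s, ξh s k * (y k - x k ⬝ᵥ θh s) ^ 2) + (1 - ∑ s, (ξh s k) ^ 2)) =
      ∑ k, ⨅ s : Fin S, (y k - x k ⬝ᵥ θh s) ^ 2 := by
  -- The cost of each sample under the one-hot assignment is its smallest squared residual.
  have hval : ∀ k, (∑ s, ξh s k * (y k - x k ⬝ᵥ θh s) ^ 2) + (1 - ∑ s, (ξh s k) ^ 2) =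
      (y k - x k ⬝ᵥ θh (sk k)) ^ 2 := by
    intro k
    simp [hξh]
  refine ⟨⟨fun s k => ?_, fun k => by simp [hξh]⟩, fun ξ hξ => ?_, ?_⟩
  · rw [hξh]
    split_ifs <;> norm_num
  · refine Finset.sum_le_sum fun k _ => ?_
    rw [hval]
    have hlin : (y k - x k ⬝ᵥ θh (sk k)) ^ 2 ≤ ∑ s, ξ s k * (y k - x k ⬝ᵥ θh s) ^ 2 := by
      calc (y k - x k ⬝ᵥ θh (sk k)) ^ 2
          = ∑ s, ξ s k * (y k - x k ⬝ᵥ θh (sk k)) ^ 2 := by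
            rw [← Finset.sum_mul, hξ.2 k, one_mul]
        _ ≤ _ := Finset.sum_le_sum fun s _ =>
            mul_le_mul_of_nonneg_left (hsk k s) (hξ.1 s k).1
    have hpen : ∑ s, (ξ s k) ^ 2 ≤ 1 := by
      rw [← hξ.2 k]
      exact Finset.sum_le_sum fun s _ => pow_le_of_le_one (hξ.1 s k).1 (hξ.1 s k).2 two_ne_zero
    linarith
  · refine Finset.sum_congr rfl fun k _ => ?_
    rw [hval]
    -- `sk k` witnesses that the index set is nonempty, so the infimum is a genuine minimum.
    haveI : Nonempty (Fin S) := ⟨sk k⟩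
    exact le_antisymm (le_ciInf (hsk k)) (ciInf_le (Set.finite_range _).bddBelow (sk k))
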